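/- arXiv:1205.6530 — 2 statements merged into one kernel-verified Lean document; each statement's English description precedes it below -/
import Mathlib

section
/- Let 0 < A ≤ B < ∞. If for a.e. σ ∈ 𝕋^r the family {g_i(σ) : i ∈ I} is a Riesz family in H with constants A and B, then the family {f_{i,m} : i ∈ I, m ∈ ℤ^r} is a Riesz family in L²(𝕋^r, H) with the same constants A and B. -/
open MeasureTheory
open scoped ENNReal NNReal

noncomputable section

/-- The unit cube `[0,1)^r` in `ℝ^r`. -/
def cube (r : ℕ) : Set (Fin r → ℝ) := Set.univ.pi fun _ => Set.Ico (0 : ℝ) 1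

/-- Lebesgue measure on the torus `𝕋^r`, identified with the cube `[0,1)^r`. -/
def torusMeasure (r : ℕ) : Measure (Fin r → ℝ) := volume.restrict (cube r)

/-- The character `e_m(σ) = exp(2πi⟨m,σ⟩)` on `𝕋^r`. -/
def char {r : ℕ} (m : Fin r → ℤ) (σ : Fin r → ℝ) : ℂ :=
  Complex.exp (2 * (Real.pi : ℂ) * Complex.I * ∑ j, (m j : ℂ) * (σ j : ℂ))

/-!
A finite combination `F = ∑ a_{i,m} f_{i,m}` takes the value `∑ i, c_i(σ) g_i(σ)` at `σ`, with
the trigonometric polynomials `c_i = ∑ m, a_{i,m} e_m` as coefficients. Integrating the pointwise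
Riesz bounds compares `‖F‖²` with `∑ i, ‖c_i‖²`, and `‖c_i‖² = ∑ m, |a_{i,m}|²` because the
characters are orthonormal. Only this orthonormality is specific to the torus.
-/

section RieszBounds

variable {𝕜 E ι : Type*} [RCLike 𝕜] [NormedAddCommGroup E]

variable (𝕜) in
/-- The two-sided inequality in the definition of a Riesz family `v` with constants `A` and `B`,
for finitely supported coefficients in `𝕜`. The constants are arbitrary reals: `0 < A ≤ B` is not
part of the definition. -/
def HasRieszBounds [NormedSpace 𝕜 E] (A B : ℝ) (v : ι → E) : Prop :=
  ∀ (s : Finset ι) (a : ι → 𝕜),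
    A * ∑ i ∈ s, ‖a i‖ ^ 2 ≤ ‖∑ i ∈ s, a i • v i‖ ^ 2 ∧
    ‖∑ i ∈ s, a i • v i‖ ^ 2 ≤ B * ∑ i ∈ s, ‖a i‖ ^ 2

theorem norm_sq_sum_smul_of_orthonormal [InnerProductSpace 𝕜 E] {v : ι → E}
    (hv : Orthonormal 𝕜 v) (s : Finset ι) (a : ι → 𝕜) :
    ‖∑ i ∈ s, a i • v i‖ ^ 2 = ∑ i ∈ s, ‖a i‖ ^ 2 := by
  rw [← RCLike.ofReal_inj (K := 𝕜)]
  push_cast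
  rw [← inner_self_eq_norm_sq_to_K, hv.inner_sum]
  simp only [RCLike.conj_mul]

end RieszBounds

theorem exists_finset_fibers {ι κ : Type*} (s : Finset (ι × κ)) :
    ∃ (t : Finset ι) (u : ι → Finset κ), ∀ p, p ∈ s ↔ p.1 ∈ t ∧ p.2 ∈ u p.1 := by
  classical
  refine ⟨s.image Prod.fst, fun i => s.preimage (Prod.mk i) (Prod.mk_right_injective i).injOn,
    fun p => ?_⟩
  simpa using fun hp : p ∈ s => ⟨p.2, hp⟩

section Lp

variable {𝕜 E X ι κ : Type*} [RCLike 𝕜] [NormedAddCommGroup E] [MeasurableSpace X]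
  {μ : Measure X}

theorem integrable_norm_sq_coeFn (F : Lp E 2 μ) : Integrable (fun x => ‖F x‖ ^ 2) μ :=
  (memLp_two_iff_integrable_sq_norm (Lp.aestronglyMeasurable F)).1 (Lp.memLp F)

theorem norm_sq_eq_integral_norm_sq (F : Lp E 2 μ) : ‖F‖ ^ 2 = ∫ x, ‖F x‖ ^ 2 ∂μ := by
  have norm_eq_sqrt : ‖F‖ = √(∫ x, ‖F x‖ ^ 2 ∂μ) := by
    rw [Lp.norm_def, toReal_eLpNorm (Lp.aestronglyMeasurable F),
      lpNorm_eq_integral_norm_rpow_toReal two_ne_zero ENNReal.ofNat_ne_top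
        (Lp.aestronglyMeasurable F)]
    simp [Real.sqrt_eq_rpow]
  rw [norm_eq_sqrt, Real.sq_sqrt (integral_nonneg fun x => sq_nonneg ‖F x‖)]

theorem sum_norm_sq_eq_integral (t : Finset ι) (c : ι → Lp E 2 μ) :
    ∑ i ∈ t, ‖c i‖ ^ 2 = ∫ x, ∑ i ∈ t, ‖c i x‖ ^ 2 ∂μ := by
  simp only [norm_sq_eq_integral_norm_sq]
  exact (integral_finsetSum t fun i _ => integrable_norm_sq_coeFn (c i)).symm

variable [NormedSpace 𝕜 E]

theorem coeFn_sum_smul_ae_eq {p : ℝ≥0∞} (s : Finset κ) (a : κ → 𝕜) (f : κ → Lp E p μ) :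
    ⇑(∑ j ∈ s, a j • f j) =ᵐ[μ] fun x => ∑ j ∈ s, a j • f j x := by
  have smul_ae_eq : ∀ᵐ x ∂μ, ∀ j ∈ s, (a j • f j) x = a j • f j x :=
    (Finset.eventually_all s).2 fun j _ => Lp.coeFn_smul (a j) (f j)
  filter_upwards [Lp.coeFn_fun_finsetSum s fun j => a j • f j, smul_ae_eq] with x hsum hsmul
  rw [hsum, Finset.sum_congr rfl hsmul]

theorem coeFn_sum_smul_ae_eq_smul {p q : ℝ≥0∞} {e : κ → Lp 𝕜 q μ} {g : X → E}
    {f : κ → Lp E p μ} (hf : ∀ j, f j =ᵐ[μ] fun x => e j x • g x) (s : Finset κ) (a : κ → 𝕜) :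
    ⇑(∑ j ∈ s, a j • f j) =ᵐ[μ] fun x => (∑ j ∈ s, a j • e j) x • g x := by
  have hf_ae : ∀ᵐ x ∂μ, ∀ j ∈ s, f j x = e j x • g x :=
    (Finset.eventually_all s).2 fun j _ => hf j
  filter_upwards [coeFn_sum_smul_ae_eq s a f, coeFn_sum_smul_ae_eq s a e, hf_ae]
    with x hsum_f hsum_e hfx
  rw [hsum_f, hsum_e, Finset.sum_smul]
  exact Finset.sum_congr rfl fun j hj => by rw [hfx j hj, smul_assoc]

theorem coeFn_sum_sum_smul_ae_eq {p q : ℝ≥0∞} {e : κ → Lp 𝕜 q μ} {g : ι → X → E}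
    {f : ι × κ → Lp E p μ} (hf : ∀ i j, f (i, j) =ᵐ[μ] fun x => e j x • g i x)
    (t : Finset ι) (u : ι → Finset κ) (a : ι × κ → 𝕜) :
    ⇑(∑ i ∈ t, ∑ j ∈ u i, a (i, j) • f (i, j)) =ᵐ[μ]
      fun x => ∑ i ∈ t, (∑ j ∈ u i, a (i, j) • e j) x • g i x := by
  have inner_sum_ae_eq : ∀ᵐ x ∂μ, ∀ i ∈ t,
      (∑ j ∈ u i, a (i, j) • f (i, j)) x = (∑ j ∈ u i, a (i, j) • e j) x • g i x :=
    (Finset.eventually_all t).2 fun i _ =>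
      coeFn_sum_smul_ae_eq_smul (hf i) (u i) fun j => a (i, j)
  filter_upwards [Lp.coeFn_fun_finsetSum t fun i => ∑ j ∈ u i, a (i, j) • f (i, j),
    inner_sum_ae_eq] with x hsum hinner
  rw [hsum, Finset.sum_congr rfl hinner]

theorem norm_sq_bounds_of_ae_hasRieszBounds {g : ι → X → E} {A B : ℝ}
    (hg : ∀ᵐ x ∂μ, HasRieszBounds 𝕜 A B fun i => g i x) {t : Finset ι} {c : ι → Lp 𝕜 2 μ}
    {F : Lp E 2 μ} (hF : F =ᵐ[μ] fun x => ∑ i ∈ t, c i x • g i x) :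
    A * ∑ i ∈ t, ‖c i‖ ^ 2 ≤ ‖F‖ ^ 2 ∧ ‖F‖ ^ 2 ≤ B * ∑ i ∈ t, ‖c i‖ ^ 2 := by
  have integrable_coeff : Integrable (fun x => ∑ i ∈ t, ‖c i x‖ ^ 2) μ :=
    integrable_finsetSum t fun i _ => integrable_norm_sq_coeFn (c i)
  have pointwise_bounds : ∀ᵐ x ∂μ, A * ∑ i ∈ t, ‖c i x‖ ^ 2 ≤ ‖F x‖ ^ 2 ∧
      ‖F x‖ ^ 2 ≤ B * ∑ i ∈ t, ‖c i x‖ ^ 2 := by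
    filter_upwards [hF, hg] with x hFx hgx
    simpa only [hFx] using hgx t fun i => c i x
  rw [sum_norm_sq_eq_integral, norm_sq_eq_integral_norm_sq, ← integral_const_mul,
    ← integral_const_mul]
  exact ⟨integral_mono_ae (integrable_coeff.const_mul A) (integrable_norm_sq_coeFn F)
      (pointwise_bounds.mono fun _ => And.left),
    integral_mono_ae (integrable_norm_sq_coeFn F) (integrable_coeff.const_mul B)
      (pointwise_bounds.mono fun _ => And.right)⟩

theorem riesz_of_ae_riesz_general {e : κ → Lp 𝕜 2 μ} (he : Orthonormal 𝕜 e) {g : ι → X → E}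
    {f : ι × κ → Lp E 2 μ} (hf : ∀ i j, f (i, j) =ᵐ[μ] fun x => e j x • g i x) {A B : ℝ}
    (hg : ∀ᵐ x ∂μ, HasRieszBounds 𝕜 A B fun i => g i x) :
    HasRieszBounds 𝕜 A B f := by
  intro s a
  obtain ⟨t, u, mem_iff⟩ := exists_finset_fibers s
  have sum_norm_sq : ∑ p ∈ s, ‖a p‖ ^ 2 = ∑ i ∈ t, ‖∑ j ∈ u i, a (i, j) • e j‖ ^ 2 := by
    simp only [norm_sq_sum_smul_of_orthonormal he, Finset.sum_finset_product s t u mem_iff]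
  rw [sum_norm_sq, Finset.sum_finset_product s t u mem_iff]
  exact norm_sq_bounds_of_ae_hasRieszBounds hg (coeFn_sum_sum_smul_ae_eq hf t u a)

end Lp

section Torus

theorem measurePreserving_coe_Ico_haarAddCircle (x : ℝ) :
    MeasurePreserving ((↑) : ℝ → UnitAddCircle) (volume.restrict (Set.Ico x (x + 1)))
      AddCircle.haarAddCircle := by
  have haar_eq_volume : (AddCircle.haarAddCircle : Measure UnitAddCircle) = volume := by
    simp [AddCircle.volume_eq_smul_haarAddCircle]
  rw [haar_eq_volume, restrict_Ico_eq_restrict_Ioc]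
  exact UnitAddCircle.measurePreserving_mk x

variable {r : ℕ}

theorem measurePreserving_torusMeasure :
    MeasurePreserving (fun (σ : Fin r → ℝ) j => (σ j : UnitAddCircle)) (torusMeasure r)
      (Measure.pi fun _ => AddCircle.haarAddCircle) := by
  rw [torusMeasure, cube, volume_pi, Measure.restrict_pi_pi]
  exact measurePreserving_pi _ _ fun _ => by
    simpa using measurePreserving_coe_Ico_haarAddCircle 0

theorem mFourier_coe_eq_char (m : Fin r → ℤ) (σ : Fin r → ℝ) :
    UnitAddTorus.mFourier m (fun j => (σ j : UnitAddCircle)) = char m σ := by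
  simp [UnitAddTorus.mFourier, char, Finset.mul_sum, Complex.exp_sum, mul_assoc]

/-- The character `e_m` as an element of `L²(𝕋^r)`, obtained by pulling the Fourier monomial on
`(ℝ/ℤ)^r` back to the cube; this makes the family inherit orthonormality from Mathlib. -/
def charLp (m : Fin r → ℤ) : Lp ℂ 2 (torusMeasure r) :=
  Lp.compMeasurePreservingₗᵢ ℂ _ measurePreserving_torusMeasure (UnitAddTorus.mFourierLp 2 m)

theorem orthonormal_charLp : Orthonormal ℂ (charLp (r := r)) :=
  UnitAddTorus.orthonormal_mFourier.comp_linearIsometry _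

theorem coeFn_charLp (m : Fin r → ℤ) : charLp m =ᵐ[torusMeasure r] char m := by
  filter_upwards [Lp.coeFn_compMeasurePreserving (UnitAddTorus.mFourierLp 2 m)
      measurePreserving_torusMeasure,
    measurePreserving_torusMeasure.quasiMeasurePreserving.ae
      (UnitAddTorus.coeFn_mFourierLp 2 m)] with σ hcomp hmonomial
  exact hcomp.trans (hmonomial.trans (mFourier_coe_eq_char m σ))

end Torus

/-- If for a.e. `σ` the family `{g_i(σ)}` is a Riesz family in `H` with constants `A, B`, then
the family `{f_{i,m}}`, `f_{i,m}(σ) = e_m(σ) g_i(σ)`, is a Riesz family in `L²(𝕋^r, H)` with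
the same constants. -/
theorem riesz_of_ae_riesz (r : ℕ) (hr : 0 < r)
    {H : Type} [NormedAddCommGroup H] [InnerProductSpace ℂ H] [CompleteSpace H]
    [TopologicalSpace.SeparableSpace H]
    {I : Type} [Countable I]
    (g : I → Lp H 2 (torusMeasure r))
    (f : I × (Fin r → ℤ) → Lp H 2 (torusMeasure r))
    (hf : ∀ (i : I) (m : Fin r → ℤ),
      ⇑(f (i, m)) =ᵐ[torusMeasure r] fun σ => char m σ • ⇑(g i) σ)
    (A B : ℝ) (hA : 0 < A) (hAB : A ≤ B)
    (hae : ∀ᵐ σ ∂(torusMeasure r), ∀ (t : Finset I) (c : I → ℂ),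
      A * ∑ i ∈ t, ‖c i‖ ^ 2 ≤ ‖∑ i ∈ t, c i • ⇑(g i) σ‖ ^ 2 ∧
      ‖∑ i ∈ t, c i • ⇑(g i) σ‖ ^ 2 ≤ B * ∑ i ∈ t, ‖c i‖ ^ 2) :
    ∀ (s : Finset (I × (Fin r → ℤ))) (a : I × (Fin r → ℤ) → ℂ),
      A * ∑ p ∈ s, ‖a p‖ ^ 2 ≤ ‖∑ p ∈ s, a p • f p‖ ^ 2 ∧
      ‖∑ p ∈ s, a p • f p‖ ^ 2 ≤ B * ∑ p ∈ s, ‖a p‖ ^ 2 :=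
  riesz_of_ae_riesz_general orthonormal_charLp
    (fun i m => (hf i m).trans ((coeFn_charLp m).symm.smul (.refl _ (g i)))) hae
end
end

section
/- Let 0 < A ≤ B < ∞. The family {f_{i,m} : i ∈ I, m ∈ ℤ^r} is a Riesz family in L²(𝕋^r, H) with constants A and B if and only if for a.e. σ ∈ 𝕋^r the family {g_i(σ) : i ∈ I} is a Riesz family in H with the same constants A and B. -/
open MeasureTheory
open scoped ENNReal NNReal

noncomputable section

/-!
Write `P_i = ∑ m, a_{i,m} e_m`. Then `∑ a_{i,m} f_{i,m} = ∑ P_i g_i`, and by Parseval both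
`‖∑ a_{i,m} f_{i,m}‖²` and `∑ |a_{i,m}|²` are integrals over `σ` of the corresponding quantities for
the family `g_i(σ)` with coefficients `P_i(σ)`. Hence pointwise Riesz bounds integrate to the bounds
for the `f_{i,m}`.

Conversely, fix coefficients `c_i` and let `w(σ)` be the defect of one of the two bounds for
`g_i(σ)`. Taking `P_i = c_i p` gives `∫ w |p|² ≥ 0` for all trigonometric polynomials `p`. Since
these are dense in `C(𝕋^r)`, the measure `w⁻ dσ` is dominated by `w⁺ dσ`, so `w ≥ 0` almost
everywhere. A countable dense set of coefficients then yields one null set for all `c`.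
-/

theorem norm_sq_eq_integral_norm_sq_s12 {α E : Type*} [MeasurableSpace α] [NormedAddCommGroup E]
    {μ : Measure α} (u : Lp E 2 μ) : ‖u‖ ^ 2 = ∫ x, ‖u x‖ ^ 2 ∂μ := by
  have := (Lp.memLp u).eLpNorm_eq_integral_rpow_norm two_ne_zero ENNReal.ofNat_ne_top
  rw [Lp.norm_def, this, ENNReal.toReal_ofReal (by positivity), ENNReal.toReal_ofNat,
    ← Real.rpow_natCast, ← Real.rpow_mul (by positivity)]
  norm_num

section ContinuousMap

variable {X 𝕜 : Type*} [TopologicalSpace X] [CompactSpace X] [MeasurableSpace X] [BorelSpace X]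
  [RCLike 𝕜] (μ : Measure X) [IsFiniteMeasure μ]

theorem norm_toLp_sq_eq_integral_norm_sq (φ : C(X, 𝕜)) :
    ‖ContinuousMap.toLp 2 μ 𝕜 φ‖ ^ 2 = ∫ x, ‖φ x‖ ^ 2 ∂μ := by
  rw [norm_sq_eq_integral_norm_sq_s12]
  refine integral_congr_ae ?_
  filter_upwards [ContinuousMap.coeFn_toLp (p := 2) (𝕜 := 𝕜) μ φ] with x hx
  rw [hx]

theorem continuous_integral_norm_sq : Continuous fun φ : C(X, 𝕜) ↦ ∫ x, ‖φ x‖ ^ 2 ∂μ := by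
  simp_rw [← norm_toLp_sq_eq_integral_norm_sq]
  fun_prop

end ContinuousMap

section MeasureComparison

variable {X : Type*} [TopologicalSpace X] [MeasurableSpace X] [BorelSpace X]
  {μ ν : Measure X} [IsFiniteMeasure μ] [IsFiniteMeasure ν]

theorem measure_le_of_forall_lintegral_le [HasOuterApproxClosed X] [μ.WeaklyRegular]
    (h : ∀ f : BoundedContinuousFunction X ℝ≥0, ∫⁻ x, f x ∂μ ≤ ∫⁻ x, f x ∂ν) : μ ≤ ν := by
  have le_on_closed (F : Set X) (hF : IsClosed F) : μ F ≤ ν F :=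
    le_of_tendsto_of_tendsto' (HasOuterApproxClosed.tendsto_lintegral_apprSeq hF μ)
      (HasOuterApproxClosed.tendsto_lintegral_apprSeq hF ν) fun n ↦ h (hF.apprSeq n)
  refine Measure.le_iff.2 fun s hs ↦ ?_
  rw [hs.measure_eq_iSup_isClosed_of_ne_top (measure_ne_top μ s)]
  exact iSup₂_le fun F hFs ↦ iSup_le fun hF ↦ (le_on_closed F hF).trans (measure_mono hFs)

theorem measure_le_of_dense_of_integral_norm_sq_le {𝕜 : Type*} [RCLike 𝕜] [CompactSpace X]
    [HasOuterApproxClosed X] [μ.WeaklyRegular] {D : Set C(X, 𝕜)} (hD : Dense D)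
    (h : ∀ φ ∈ D, ∫ x, ‖φ x‖ ^ 2 ∂μ ≤ ∫ x, ‖φ x‖ ^ 2 ∂ν) : μ ≤ ν := by
  have h_all (φ : C(X, 𝕜)) : ∫ x, ‖φ x‖ ^ 2 ∂μ ≤ ∫ x, ‖φ x‖ ^ 2 ∂ν :=
    hD.induction h
      (isClosed_le (continuous_integral_norm_sq μ) (continuous_integral_norm_sq ν)) φ
  refine measure_le_of_forall_lintegral_le fun f ↦ ?_
  let root : C(X, 𝕜) := ⟨fun x ↦ (√(f x : ℝ) : ℝ), by fun_prop⟩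
  have norm_root_sq (x : X) : ‖root x‖ ^ 2 = f x := by
    simp [root, Real.sq_sqrt]
  have h_root := h_all root
  simp_rw [norm_root_sq] at h_root
  rw [lintegral_coe_eq_integral _ (f.integrable_of_nnreal μ),
    lintegral_coe_eq_integral _ (f.integrable_of_nnreal ν)]
  exact ENNReal.ofReal_le_ofReal h_root

end MeasureComparison

theorem measure_le_of_map_le {Ω X : Type*} [MeasurableSpace Ω] [StandardBorelSpace Ω]
    [MeasurableSpace X] [MeasurableSpace.CountablySeparated X] {μ ν : Measure Ω} {q : Ω → X}
    {s : Set Ω} (hq : Measurable q) (hs : MeasurableSet s) (hqs : Set.InjOn q s)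
    (hμ : ∀ᵐ ω ∂μ, ω ∈ s) (hν : ∀ᵐ ω ∂ν, ω ∈ s) (h : μ.map q ≤ ν.map q) : μ ≤ ν := by
  refine Measure.le_iff.2 fun E hE ↦ ?_
  have h_image : MeasurableSet (q '' (E ∩ s)) :=
    (hE.inter hs).image_of_measurable_injOn hq (hqs.mono Set.inter_subset_right)
  have ae_eq_preimage_image {ρ : Measure Ω} (hρ : ∀ᵐ ω ∂ρ, ω ∈ s) :
      E =ᵐ[ρ] q ⁻¹' (q '' (E ∩ s)) := by
    filter_upwards [hρ] with ω hω
    refine propext ⟨fun hωE ↦ ⟨ω, ⟨hωE, hω⟩, rfl⟩, ?_⟩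
    rintro ⟨ω', ⟨hω'E, hω's⟩, h_eq⟩
    exact hqs hω's hω h_eq ▸ hω'E
  calc μ E = μ.map q (q '' (E ∩ s)) := by
        rw [Measure.map_apply hq h_image, measure_congr (ae_eq_preimage_image hμ)]
    _ ≤ ν.map q (q '' (E ∩ s)) := h _
    _ = ν E := by rw [Measure.map_apply hq h_image, measure_congr (ae_eq_preimage_image hν)]

theorem ae_le_of_withDensity_le {α : Type*} [MeasurableSpace α] {μ : Measure α} [SigmaFinite μ]
    {f g : α → ℝ≥0∞} (hf : AEMeasurable f μ) (h : μ.withDensity f ≤ μ.withDensity g) :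
    f ≤ᵐ[μ] g := by
  refine ae_le_of_forall_setLIntegral_le_of_sigmaFinite₀ hf fun s hs _ ↦ ?_
  simpa only [withDensity_apply _ hs] using h s

theorem integral_withDensity_ofReal_sub_integral_withDensity_ofReal_neg {Ω : Type*}
    [MeasurableSpace Ω] {μ : Measure Ω} {w φ : Ω → ℝ} (hw : AEMeasurable w μ)
    (hφ : AEStronglyMeasurable φ μ) (hwφ : Integrable (fun ω ↦ w ω * φ ω) μ) :
    ∫ ω, φ ω ∂μ.withDensity (fun ω ↦ ENNReal.ofReal (w ω)) -
      ∫ ω, φ ω ∂μ.withDensity (fun ω ↦ ENNReal.ofReal (-w ω)) = ∫ ω, w ω * φ ω ∂μ := by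
  have integrable_part {v : Ω → ℝ} (hv : AEMeasurable v μ) (hvw : ∀ ω, |v ω| = |w ω|) :
      Integrable (fun ω ↦ (v ω).toNNReal • φ ω) μ := by
    refine hwφ.mono (hv.real_toNNReal.aestronglyMeasurable.smul hφ) (.of_forall fun ω ↦ ?_)
    rw [NNReal.smul_def, smul_eq_mul, norm_mul, norm_mul, Real.norm_eq_abs (w ω), ← hvw,
      Real.coe_toNNReal', Real.norm_of_nonneg (le_max_right _ _)]
    gcongr
    exact max_le (le_abs_self _) (abs_nonneg _)
  calc _ = ∫ ω, (w ω).toNNReal • φ ω ∂μ - ∫ ω, (-w ω).toNNReal • φ ω ∂μ :=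
        congrArg₂ _ (integral_withDensity_eq_integral_smul₀ hw.real_toNNReal φ)
          (integral_withDensity_eq_integral_smul₀ hw.neg.real_toNNReal φ)
    _ = ∫ ω, ((w ω).toNNReal • φ ω - (-w ω).toNNReal • φ ω) ∂μ :=
        (integral_sub (integrable_part hw fun _ ↦ rfl)
          (integrable_part hw.neg fun ω ↦ abs_neg (w ω))).symm
    _ = ∫ ω, w ω * φ ω ∂μ := by
        simp_rw [NNReal.smul_def, ← sub_smul, Real.coe_toNNReal', max_zero_sub_max_neg_zero_eq_self,
          smul_eq_mul]

theorem integral_map_withDensity_ofReal_sub_integral_map_withDensity_ofReal_neg {Ω X : Type*}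
    [MeasurableSpace Ω] [TopologicalSpace X] [CompactSpace X] [MeasurableSpace X]
    [OpensMeasurableSpace X] {μ : Measure Ω} {q : Ω → X} (hq : Measurable q) {w : Ω → ℝ}
    (hw : Integrable w μ) (φ : C(X, ℝ)) :
    ∫ x, φ x ∂(μ.withDensity fun ω ↦ ENNReal.ofReal (w ω)).map q -
      ∫ x, φ x ∂(μ.withDensity fun ω ↦ ENNReal.ofReal (-w ω)).map q =
        ∫ ω, w ω * φ (q ω) ∂μ := by
  have hφ : StronglyMeasurable φ := φ.continuous.stronglyMeasurable
  have hφq : AEStronglyMeasurable (fun ω ↦ φ (q ω)) μ :=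
    (hφ.comp_measurable hq).aestronglyMeasurable
  have h_bound : ∀ᵐ ω ∂μ, ‖φ (q ω)‖ ≤ ‖φ‖ := .of_forall fun ω ↦ φ.norm_coe_le_norm _
  rw [integral_map hq.aemeasurable hφ.aestronglyMeasurable,
    integral_map hq.aemeasurable hφ.aestronglyMeasurable]
  exact integral_withDensity_ofReal_sub_integral_withDensity_ofReal_neg hw.aemeasurable hφq
    (hw.mul_bdd hφq h_bound)

theorem ae_nonneg_of_dense_of_integral_mul_norm_sq_nonneg {Ω X 𝕜 : Type*} [MeasurableSpace Ω]
    [StandardBorelSpace Ω] [TopologicalSpace X] [CompactSpace X]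
    [TopologicalSpace.MetrizableSpace X] [MeasurableSpace X] [BorelSpace X] [RCLike 𝕜]
    {μ : Measure Ω} [SigmaFinite μ] {q : Ω → X} {s : Set Ω} (hq : Measurable q)
    (hs : MeasurableSet s) (hqs : Set.InjOn q s) (hμs : ∀ᵐ ω ∂μ, ω ∈ s)
    {D : Set C(X, 𝕜)} (hD : Dense D) {w : Ω → ℝ} (hw : Integrable w μ)
    (h : ∀ φ ∈ D, 0 ≤ ∫ ω, w ω * ‖φ (q ω)‖ ^ 2 ∂μ) : 0 ≤ᵐ[μ] w := by
  let posPart : Measure Ω := μ.withDensity fun ω ↦ ENNReal.ofReal (w ω)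
  let negPart : Measure Ω := μ.withDensity fun ω ↦ ENNReal.ofReal (-w ω)
  have : IsFiniteMeasure posPart := isFiniteMeasure_withDensity_ofReal hw.2
  have : IsFiniteMeasure negPart := isFiniteMeasure_withDensity_ofReal hw.neg.2
  have negPart_le_posPart : negPart ≤ posPart := by
    refine measure_le_of_map_le hq hs hqs (withDensity_absolutelyContinuous _ _ hμs)
      (withDensity_absolutelyContinuous _ _ hμs)
      (measure_le_of_dense_of_integral_norm_sq_le hD fun φ hφ ↦ ?_)
    have integral_sub_eq :=
      integral_map_withDensity_ofReal_sub_integral_map_withDensity_ofReal_neg hq hw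
        ⟨fun x ↦ ‖φ x‖ ^ 2, by fun_prop⟩
    exact sub_nonneg.1 ((h φ hφ).trans_eq integral_sub_eq.symm)
  filter_upwards [ae_le_of_withDensity_le hw.neg.aemeasurable.ennreal_ofReal negPart_le_posPart]
    with ω hω
  have h_or : -w ω ≤ w ω ∨ -w ω ≤ 0 := ENNReal.ofReal_le_ofReal_iff'.1 hω
  rw [Pi.zero_apply]
  grind

theorem integral_norm_sq_sum_smul_mFourier {d : Type*} [Fintype d] (S : Finset (d → ℤ))
    (b : (d → ℤ) → ℂ) :
    ∫ x, ‖(∑ m ∈ S, b m • UnitAddTorus.mFourier m) x‖ ^ 2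
      ∂Measure.pi (fun _ : d ↦ AddCircle.haarAddCircle) = ∑ m ∈ S, ‖b m‖ ^ 2 := by
  rw [← norm_toLp_sq_eq_integral_norm_sq, map_sum]
  simp_rw [map_smul]
  simpa using! UnitAddTorus.orthonormal_mFourier.orthogonalFamily.norm_sum b S

section Torus

variable {r : ℕ}

/-- The projection of `ℝ^r` onto the torus, through which characters and Parseval's identity are
pulled back from Mathlib's `UnitAddTorus` to the cube. -/
def torusProj (σ : Fin r → ℝ) : UnitAddTorus (Fin r) := fun j ↦ (σ j : UnitAddCircle)

theorem continuous_torusProj : Continuous (torusProj (r := r)) :=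
  continuous_pi fun j ↦ (AddCircle.continuous_mk' 1).comp (continuous_apply j)

theorem measurableSet_cube : MeasurableSet (cube r) :=
  .univ_pi fun _ ↦ measurableSet_Ico

theorem injOn_torusProj_cube : Set.InjOn torusProj (cube r) := by
  intro x hx y hy h
  ext j
  refine (AddCircle.coe_eq_coe_iff_of_mem_Ico (p := 1) (a := 0) ?_ ?_).1 (congrFun h j)
  · simpa using hx j trivial
  · simpa using hy j trivial

theorem mFourier_torusProj (m : Fin r → ℤ) (σ : Fin r → ℝ) :
    UnitAddTorus.mFourier m (torusProj σ) = char m σ := by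
  simp only [UnitAddTorus.mFourier, ContinuousMap.coe_mk, torusProj, fourier_coe_apply,
    Complex.ofReal_one, div_one, ← Complex.exp_sum, char, Finset.mul_sum, mul_assoc]

theorem measurePreserving_torusProj : MeasurePreserving torusProj (torusMeasure r)
    (Measure.pi fun _ : Fin r ↦ AddCircle.haarAddCircle) := by
  rw [torusMeasure, cube, volume_pi, Measure.restrict_pi_pi]
  refine measurePreserving_pi _ _ fun _ ↦ ?_
  have h := UnitAddCircle.measurePreserving_mk 0
  rw [AddCircle.volume_eq_smul_haarAddCircle, ENNReal.ofReal_one, one_smul, zero_add] at h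
  rwa [Measure.restrict_congr_set Ico_ae_eq_Ioc]

instance isProbabilityMeasure_torusMeasure : IsProbabilityMeasure (torusMeasure r) :=
  (Measure.isProbabilityMeasure_map_iff continuous_torusProj.measurable.aemeasurable).1 <|
    measurePreserving_torusProj.map_eq ▸ inferInstance

/-- The trigonometric polynomial with coefficients `b` and frequencies in `S`. -/
def trigPoly (S : Finset (Fin r → ℤ)) (b : (Fin r → ℤ) → ℂ) (σ : Fin r → ℝ) : ℂ :=
  ∑ m ∈ S, b m * char m σ

theorem sum_smul_mFourier_torusProj (S : Finset (Fin r → ℤ)) (b : (Fin r → ℤ) → ℂ)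
    (σ : Fin r → ℝ) : (∑ m ∈ S, b m • UnitAddTorus.mFourier m) (torusProj σ) = trigPoly S b σ := by
  simp [trigPoly, mFourier_torusProj]

theorem integrable_norm_sq_trigPoly (S : Finset (Fin r → ℤ)) (b : (Fin r → ℤ) → ℂ) :
    Integrable (fun σ ↦ ‖trigPoly S b σ‖ ^ 2) (torusMeasure r) := by
  have h_torus : Integrable (fun x ↦ ‖(∑ m ∈ S, b m • UnitAddTorus.mFourier m) x‖ ^ 2)
      (Measure.pi fun _ : Fin r ↦ AddCircle.haarAddCircle) :=
    Continuous.integrable_of_hasCompactSupport (by fun_prop) (.of_compactSpace _)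
  simp_rw [← sum_smul_mFourier_torusProj]
  exact measurePreserving_torusProj.integrable_comp_of_integrable h_torus

theorem integral_norm_sq_trigPoly (S : Finset (Fin r → ℤ)) (b : (Fin r → ℤ) → ℂ) :
    ∫ σ, ‖trigPoly S b σ‖ ^ 2 ∂torusMeasure r = ∑ m ∈ S, ‖b m‖ ^ 2 := by
  rw [← integral_norm_sq_sum_smul_mFourier, ← measurePreserving_torusProj.map_eq, integral_map
    continuous_torusProj.measurable.aemeasurable (Continuous.aestronglyMeasurable (by fun_prop))]
  simp_rw [sum_smul_mFourier_torusProj]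

theorem ae_nonneg_of_integral_mul_norm_sq_trigPoly_nonneg {w : (Fin r → ℝ) → ℝ}
    (hw : Integrable w (torusMeasure r))
    (h : ∀ S b, 0 ≤ ∫ σ, w σ * ‖trigPoly S b σ‖ ^ 2 ∂torusMeasure r) :
    0 ≤ᵐ[torusMeasure r] w := by
  refine ae_nonneg_of_dense_of_integral_mul_norm_sq_nonneg
    (μ := torusMeasure r) continuous_torusProj.measurable
    measurableSet_cube injOn_torusProj_cube (ae_restrict_mem measurableSet_cube)
    (Submodule.dense_iff_topologicalClosure_eq_top.2
      UnitAddTorus.span_mFourier_closure_eq_top) hw fun φ hφ ↦ ?_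
  obtain ⟨b, rfl⟩ := Finsupp.mem_span_range_iff_exists_finsupp.1 hφ
  simpa only [Finsupp.sum, sum_smul_mFourier_torusProj] using h b.support b

end Torus

section RieszForm

variable {𝕜 E ι : Type*} [NormedField 𝕜] [SeminormedAddCommGroup E] [NormedSpace 𝕜 E]

/-- The form `α ‖∑ i ∈ t, c i • v i‖² + β ∑ i ∈ t, ‖c i‖²`. The family `v` satisfies the lower Riesz
bound with constant `A` iff all values of its form with `(α, β) = (1, -A)` are nonnegative, and the
upper one with constant `B` iff this holds for `(α, β) = (-1, B)`. -/
def rieszForm (α β : ℝ) (v : ι → E) (t : Finset ι) (c : ι → 𝕜) : ℝ :=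
  α * ‖∑ i ∈ t, c i • v i‖ ^ 2 + β * ∑ i ∈ t, ‖c i‖ ^ 2

variable (α β : ℝ) (v : ι → E) (t : Finset ι)

theorem continuous_rieszForm : Continuous (rieszForm (𝕜 := 𝕜) α β v t) := by
  unfold rieszForm
  fun_prop

theorem rieszForm_one_neg_nonneg_iff (c : ι → 𝕜) :
    0 ≤ rieszForm 1 (-β) v t c ↔ β * ∑ i ∈ t, ‖c i‖ ^ 2 ≤ ‖∑ i ∈ t, c i • v i‖ ^ 2 := by
  rw [rieszForm, one_mul, neg_mul, ← sub_eq_add_neg, sub_nonneg]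

theorem rieszForm_neg_one_nonneg_iff (c : ι → 𝕜) :
    0 ≤ rieszForm (-1) β v t c ↔ ‖∑ i ∈ t, c i • v i‖ ^ 2 ≤ β * ∑ i ∈ t, ‖c i‖ ^ 2 := by
  rw [rieszForm, neg_one_mul, neg_add_eq_sub, sub_nonneg]

theorem rieszForm_smul (z : 𝕜) (c : ι → 𝕜) :
    rieszForm α β v t (z • c) = rieszForm α β v t c * ‖z‖ ^ 2 := by
  simp only [rieszForm, Pi.smul_apply, smul_eq_mul, mul_smul, ← Finset.smul_sum, norm_smul,
    norm_mul, mul_pow, ← Finset.mul_sum]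
  ring

theorem rieszForm_indicator_of_subset {s t : Finset ι} (hst : s ⊆ t) (c : ι → 𝕜) :
    rieszForm α β v t (Set.indicator s c) = rieszForm α β v s c := by
  have sum_norm_sq : ∑ i ∈ t, ‖Set.indicator (s : Set ι) c i‖ ^ 2 = ∑ i ∈ s, ‖c i‖ ^ 2 :=
    Finset.sum_indicator_subset_of_eq_zero c (fun _ z ↦ ‖z‖ ^ 2) hst (by simp)
  have sum_smul : ∑ i ∈ t, Set.indicator (s : Set ι) c i • v i = ∑ i ∈ s, c i • v i :=
    Finset.sum_indicator_subset_of_eq_zero c (fun i z ↦ z • v i) hst (by simp)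
  rw [rieszForm, rieszForm, sum_norm_sq, sum_smul]

variable {α β}

theorem rieszForm_nonneg_of_product {κ : Type*} {v : ι × κ → E}
    (h : ∀ (t : Finset ι) (u : Finset κ) (a : ι × κ → 𝕜), 0 ≤ rieszForm α β v (t ×ˢ u) a)
    (s : Finset (ι × κ)) (a : ι × κ → 𝕜) : 0 ≤ rieszForm α β v s a := by
  classical
  rw [← rieszForm_indicator_of_subset α β v Finset.subset_product a]
  exact h _ _ _

theorem ae_forall_rieszForm_nonneg {Ω : Type*} [MeasurableSpace Ω] {μ : Measure Ω}
    [Countable ι] [TopologicalSpace.SeparableSpace 𝕜] {v : ι → Ω → E}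
    (h : ∀ (t : Finset ι) (c : ι → 𝕜), ∀ᵐ ω ∂μ, 0 ≤ rieszForm α β (v · ω) t c) :
    ∀ᵐ ω ∂μ, ∀ (t : Finset ι) (c : ι → 𝕜), 0 ≤ rieszForm α β (v · ω) t c := by
  have h_dense : ∀ᵐ ω ∂μ, ∀ (t : Finset ι) (n : ℕ),
      0 ≤ rieszForm α β (v · ω) t (TopologicalSpace.denseSeq (ι → 𝕜) n) :=
    ae_all_iff.2 fun t ↦ ae_all_iff.2 fun n ↦ h t _
  filter_upwards [h_dense] with ω hω t c
  exact (TopologicalSpace.denseRange_denseSeq (ι → 𝕜)).induction_on c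
    (isClosed_le continuous_const (continuous_rieszForm α β _ t)) (hω t)

end RieszForm

theorem coeFn_sum_smul {Ω 𝕜 E ι : Type*} [MeasurableSpace Ω] {μ : Measure Ω} [NormedRing 𝕜]
    [NormedAddCommGroup E] [Module 𝕜 E] [IsBoundedSMul 𝕜 E] {p : ℝ≥0∞} (t : Finset ι) (c : ι → 𝕜)
    (g : ι → Lp E p μ) : ⇑(∑ i ∈ t, c i • g i) =ᵐ[μ] fun ω ↦ ∑ i ∈ t, c i • g i ω := by
  have coeFn_smul : ∀ᵐ ω ∂μ, ∀ i ∈ t, (c i • g i : Lp E p μ) ω = c i • g i ω :=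
    (Finset.eventually_all t).2 fun i _ ↦ Lp.coeFn_smul (c i) (g i)
  filter_upwards [Lp.coeFn_fun_finsetSum t fun i ↦ c i • g i, coeFn_smul] with ω h_sum h_smul
  rw [h_sum, Finset.sum_congr rfl h_smul]

theorem integrable_norm_sq {Ω E : Type*} [MeasurableSpace Ω] {μ : Measure Ω}
    [NormedAddCommGroup E] (u : Lp E 2 μ) : Integrable (fun ω ↦ ‖u ω‖ ^ 2) μ :=
  MemLp.integrable_norm_pow (Lp.memLp u) two_ne_zero

section Shift

variable {r : ℕ} {H I : Type*} [NormedAddCommGroup H] [NormedSpace ℂ H]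
  {g : I → Lp H 2 (torusMeasure r)}

theorem integrable_rieszForm (α β : ℝ) (t : Finset I) (c : I → ℂ) :
    Integrable (fun σ ↦ rieszForm α β (g · σ) t c) (torusMeasure r) := by
  have h_norm_sq : Integrable (fun σ ↦ ‖∑ i ∈ t, c i • g i σ‖ ^ 2) (torusMeasure r) :=
    (integrable_norm_sq (∑ i ∈ t, c i • g i)).congr <|
      (coeFn_sum_smul t c g).mono fun σ hσ ↦ by simp only [hσ]
  exact (h_norm_sq.const_mul α).add (integrable_const _)

variable {f : I × (Fin r → ℤ) → Lp H 2 (torusMeasure r)}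

theorem coeFn_sum_smul_shift
    (hf : ∀ i m, ⇑(f (i, m)) =ᵐ[torusMeasure r] fun σ ↦ char m σ • g i σ)
    (t : Finset I) (M : Finset (Fin r → ℤ)) (a : I × (Fin r → ℤ) → ℂ) :
    ⇑(∑ p ∈ t ×ˢ M, a p • f p) =ᵐ[torusMeasure r]
      fun σ ↦ ∑ i ∈ t, trigPoly M (fun m ↦ a (i, m)) σ • g i σ := by
  have coeFn_shift : ∀ᵐ σ ∂torusMeasure r, ∀ p ∈ t ×ˢ M, f p σ = char p.2 σ • g p.1 σ :=
    (Finset.eventually_all _).2 fun p _ ↦ hf p.1 p.2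
  filter_upwards [coeFn_sum_smul (t ×ˢ M) a f, coeFn_shift] with σ h_sum h_shift
  rw [h_sum, Finset.sum_congr rfl fun p hp ↦ by rw [h_shift p hp], Finset.sum_product]
  simp_rw [trigPoly, Finset.sum_smul, mul_smul]

theorem rieszForm_shift_eq_integral
    (hf : ∀ i m, ⇑(f (i, m)) =ᵐ[torusMeasure r] fun σ ↦ char m σ • g i σ)
    (α β : ℝ) (t : Finset I) (M : Finset (Fin r → ℤ)) (a : I × (Fin r → ℤ) → ℂ) :
    rieszForm α β f (t ×ˢ M) a = ∫ σ, rieszForm α β (g · σ) t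
      (fun i ↦ trigPoly M (fun m ↦ a (i, m)) σ) ∂torusMeasure r := by
  have h_ae : (fun σ ↦ ‖(∑ p ∈ t ×ˢ M, a p • f p) σ‖ ^ 2) =ᵐ[torusMeasure r]
      fun σ ↦ ‖∑ i ∈ t, trigPoly M (fun m ↦ a (i, m)) σ • g i σ‖ ^ 2 :=
    (coeFn_sum_smul_shift hf t M a).mono fun σ hσ ↦ by simp only [hσ]
  have h_int := (integrable_norm_sq (∑ p ∈ t ×ˢ M, a p • f p)).congr h_ae
  have h_int_trig : ∀ i ∈ t, Integrable (fun σ ↦ ‖trigPoly M (fun m ↦ a (i, m)) σ‖ ^ 2)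
      (torusMeasure r) := fun i _ ↦ integrable_norm_sq_trigPoly M _
  simp only [rieszForm]
  rw [integral_add (h_int.const_mul α) ((integrable_finsetSum t h_int_trig).const_mul β),
    integral_const_mul, integral_const_mul, integral_finsetSum t h_int_trig,
    norm_sq_eq_integral_norm_sq_s12, integral_congr_ae h_ae, Finset.sum_product]
  simp_rw [integral_norm_sq_trigPoly]

theorem rieszForm_shift_nonneg_iff_ae [Countable I]
    (hf : ∀ i m, ⇑(f (i, m)) =ᵐ[torusMeasure r] fun σ ↦ char m σ • g i σ)
    (α β : ℝ) :
    (∀ (s : Finset (I × (Fin r → ℤ))) (a : I × (Fin r → ℤ) → ℂ), 0 ≤ rieszForm α β f s a) ↔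
      ∀ᵐ σ ∂torusMeasure r, ∀ (t : Finset I) (c : I → ℂ), 0 ≤ rieszForm α β (g · σ) t c := by
  constructor
  · refine fun h ↦ ae_forall_rieszForm_nonneg fun t c ↦
      ae_nonneg_of_integral_mul_norm_sq_trigPoly_nonneg (integrable_rieszForm α β t c)
        fun S b ↦ ?_
    have trigPoly_smul (σ : Fin r → ℝ) :
        trigPoly S b σ • c = fun i ↦ trigPoly S (fun m ↦ c i * b m) σ := by
      ext i
      simp only [trigPoly, Pi.smul_apply, smul_eq_mul, Finset.sum_mul]
      exact Finset.sum_congr rfl fun m _ ↦ by ring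
    simp_rw [← rieszForm_smul, trigPoly_smul]
    rw [← rieszForm_shift_eq_integral hf α β t S fun p ↦ c p.1 * b p.2]
    exact h _ _
  · refine fun h ↦ rieszForm_nonneg_of_product fun t M a ↦ ?_
    rw [rieszForm_shift_eq_integral hf]
    exact integral_nonneg_of_ae (h.mono fun σ hσ ↦ hσ t _)

end Shift

theorem riesz_characterization_general {r : ℕ} {H I : Type*} [NormedAddCommGroup H]
    [NormedSpace ℂ H] [Countable I] (g : I → Lp H 2 (torusMeasure r))
    (f : I × (Fin r → ℤ) → Lp H 2 (torusMeasure r))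
    (hf : ∀ (i : I) (m : Fin r → ℤ),
      ⇑(f (i, m)) =ᵐ[torusMeasure r] fun σ => char m σ • ⇑(g i) σ)
    (A B : ℝ) :
    (∀ (s : Finset (I × (Fin r → ℤ))) (a : I × (Fin r → ℤ) → ℂ),
      A * ∑ p ∈ s, ‖a p‖ ^ 2 ≤ ‖∑ p ∈ s, a p • f p‖ ^ 2 ∧
      ‖∑ p ∈ s, a p • f p‖ ^ 2 ≤ B * ∑ p ∈ s, ‖a p‖ ^ 2) ↔
    (∀ᵐ σ ∂(torusMeasure r), ∀ (t : Finset I) (c : I → ℂ),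
      A * ∑ i ∈ t, ‖c i‖ ^ 2 ≤ ‖∑ i ∈ t, c i • ⇑(g i) σ‖ ^ 2 ∧
      ‖∑ i ∈ t, c i • ⇑(g i) σ‖ ^ 2 ≤ B * ∑ i ∈ t, ‖c i‖ ^ 2) := by
  have lower_iff := rieszForm_shift_nonneg_iff_ae hf 1 (-A)
  have upper_iff := rieszForm_shift_nonneg_iff_ae hf (-1) B
  simp only [rieszForm_one_neg_nonneg_iff, rieszForm_neg_one_nonneg_iff] at lower_iff upper_iff
  simp only [forall_and, Filter.eventually_and, lower_iff, upper_iff]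

/-- **Characterization of Riesz families (transform side).** The family `{f_{i,m}}`,
`f_{i,m}(σ) = e_m(σ) g_i(σ)`, is a Riesz family in `L²(𝕋^r, H)` with constants `A, B` iff
for a.e. `σ` the family `{g_i(σ)}` is a Riesz family in `H` with the same constants. -/
theorem riesz_characterization (r : ℕ) (hr : 0 < r)
    {H : Type} [NormedAddCommGroup H] [InnerProductSpace ℂ H] [CompleteSpace H]
    [TopologicalSpace.SeparableSpace H]
    {I : Type} [Countable I]
    (g : I → Lp H 2 (torusMeasure r))
    (f : I × (Fin r → ℤ) → Lp H 2 (torusMeasure r))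
    (hf : ∀ (i : I) (m : Fin r → ℤ),
      ⇑(f (i, m)) =ᵐ[torusMeasure r] fun σ => char m σ • ⇑(g i) σ)
    (A B : ℝ) (hA : 0 < A) (hAB : A ≤ B) :
    (∀ (s : Finset (I × (Fin r → ℤ))) (a : I × (Fin r → ℤ) → ℂ),
      A * ∑ p ∈ s, ‖a p‖ ^ 2 ≤ ‖∑ p ∈ s, a p • f p‖ ^ 2 ∧
      ‖∑ p ∈ s, a p • f p‖ ^ 2 ≤ B * ∑ p ∈ s, ‖a p‖ ^ 2) ↔
    (∀ᵐ σ ∂(torusMeasure r), ∀ (t : Finset I) (c : I → ℂ),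
      A * ∑ i ∈ t, ‖c i‖ ^ 2 ≤ ‖∑ i ∈ t, c i • ⇑(g i) σ‖ ^ 2 ∧
      ‖∑ i ∈ t, c i • ⇑(g i) σ‖ ^ 2 ≤ B * ∑ i ∈ t, ‖c i‖ ^ 2) :=
  riesz_characterization_general g f hf A B
end
end
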